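/- Every eigenvalue ρ of the self-adjoint operator T satisfies −1 ≤ ρ ≤ K(K−1). -/

import Mathlib

open MeasureTheory ContinuousLinearMap Filter
open scoped RealInnerProductSpace Topology NNReal

noncomputable section
open scoped Classical

/-- The rank-one operator `x ⊗ y : h ↦ ⟨x, h⟩ y`. -/
def tens {F G : Type*} [NormedAddCommGroup F] [InnerProductSpace ℝ F]
    [NormedAddCommGroup G] [NormedSpace ℝ G] (x : F) (y : G) : F →L[ℝ] G :=
  (innerSL ℝ x).smulRight y

variable {K : ℕ}

/-- The canonical projection `τ_k : 𝓧 → 𝓧_k`, where `𝓧 = 𝓧₁ × ⋯ × 𝓧_K` carries the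
inner product `⟨α, β⟩ = Σ_k ⟨α_k, β_k⟩` (realized as `PiLp 2 𝓧`). -/
def tau (𝓧 : Fin K → Type*) [∀ k, NormedAddCommGroup (𝓧 k)]
    [∀ k, InnerProductSpace ℝ (𝓧 k)] (k : Fin K) : PiLp 2 𝓧 →L[ℝ] 𝓧 k :=
  PiLp.proj 2 𝓧 k

variable {𝓧 : Fin K → Type*} [∀ k, NormedAddCommGroup (𝓧 k)]
  [∀ k, InnerProductSpace ℝ (𝓧 k)] [∀ k, FiniteDimensional ℝ (𝓧 k)]
variable {Ω : Type*} [MeasurableSpace Ω]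

/-- The covariance operator `V_{kℓ} = E[X_ℓ ⊗ X_k] : 𝓧_ℓ → 𝓧_k` (a Bochner integral). -/
def Vcov (P : Measure Ω) (X : Ω → PiLp 2 𝓧) (k l : Fin K) : 𝓧 l →L[ℝ] 𝓧 k :=
  ∫ ω, tens (tau 𝓧 l (X ω)) (tau 𝓧 k (X ω)) ∂P

/-- `Φ = Σ_k τ_k* V_k τ_k`. -/
def PhiOp (P : Measure Ω) (X : Ω → PiLp 2 𝓧) : PiLp 2 𝓧 →L[ℝ] PiLp 2 𝓧 :=
  ∑ k, ContinuousLinearMap.adjoint (tau 𝓧 k) ∘L Vcov P X k k ∘L tau 𝓧 k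

/-- `Ψ = Σ_{k≠ℓ} τ_k* V_{kℓ} τ_ℓ`. -/
def PsiOp (P : Measure Ω) (X : Ω → PiLp 2 𝓧) : PiLp 2 𝓧 →L[ℝ] PiLp 2 𝓧 :=
  ∑ k, ∑ l, if l = k then 0 else
    ContinuousLinearMap.adjoint (tau 𝓧 k) ∘L Vcov P X k l ∘L tau 𝓧 l

/-- `S` is the inverse of the positive square root of `A` (i.e. `S = A^{-1/2}`):
`S` is positive (hence self-adjoint) and `S ∘ S` is a two-sided inverse of `A`. -/
def IsInvSqrt {F : Type*} [NormedAddCommGroup F] [InnerProductSpace ℝ F]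
    [CompleteSpace F] (A S : F →L[ℝ] F) : Prop :=
  S.IsPositive ∧ (S ∘L S) ∘L A = 1 ∧ A ∘L (S ∘L S) = 1

/-- `φ(α) = Σ_{k≠ℓ} ⟨α_k, V_{kℓ} α_ℓ⟩`. -/
def phiForm (P : Measure Ω) (X : Ω → PiLp 2 𝓧) (a : PiLp 2 𝓧) : ℝ :=
  ∑ k, ∑ l, if l = k then 0 else ⟪tau 𝓧 k a, Vcov P X k l (tau 𝓧 l a)⟫

theorem aux_int (P : Measure Ω) (X : Ω → PiLp 2 𝓧) (hXmeas : AEStronglyMeasurable X P)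
    (hX2 : Integrable (fun ω => ‖X ω‖ ^ 2) P) (k l : Fin K) :
    Integrable (fun ω => tens (tau 𝓧 l (X ω)) (tau 𝓧 k (X ω))) P := by
  have hc : Continuous (fun x : PiLp 2 𝓧 => tens (tau 𝓧 l x) (tau 𝓧 k x)) := by
    have h1 : Continuous (fun x : PiLp 2 𝓧 =>
        ContinuousLinearMap.smulRightL ℝ (𝓧 l) (𝓧 k) (innerSL ℝ (tau 𝓧 l x)) (tau 𝓧 k x)) := by
      fun_prop
    exact h1
  refine hX2.mono' (hc.comp_aestronglyMeasurable hXmeas) (Eventually.of_forall fun ω => ?_)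
  have hn : ∀ j, ‖tau 𝓧 j (X ω)‖ ≤ ‖X ω‖ := fun j => PiLp.norm_apply_le (X ω) j
  simp only [tens, ContinuousLinearMap.norm_smulRight_apply, innerSL_apply_norm]
  rw [sq]
  exact mul_le_mul (hn l) (hn k) (norm_nonneg _) (norm_nonneg _)

theorem aux_intu (P : Measure Ω) (X : Ω → PiLp 2 𝓧) (hXmeas : AEStronglyMeasurable X P)
    (hX2 : Integrable (fun ω => ‖X ω‖ ^ 2) P) (k l : Fin K) (y : PiLp 2 𝓧) :
    Integrable (fun ω => ⟪tau 𝓧 k y, tau 𝓧 k (X ω)⟫ * ⟪tau 𝓧 l y, tau 𝓧 l (X ω)⟫) P ∧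
    ⟪tau 𝓧 k y, Vcov P X k l (tau 𝓧 l y)⟫ =
      ∫ ω, ⟪tau 𝓧 k y, tau 𝓧 k (X ω)⟫ * ⟪tau 𝓧 l y, tau 𝓧 l (X ω)⟫ ∂P := by
  have hi := aux_int P X hXmeas hX2 k l
  have he : ∀ ω, ⟪tau 𝓧 k y, tens (tau 𝓧 l (X ω)) (tau 𝓧 k (X ω)) (tau 𝓧 l y)⟫ =
      ⟪tau 𝓧 k y, tau 𝓧 k (X ω)⟫ * ⟪tau 𝓧 l y, tau 𝓧 l (X ω)⟫ := by
    intro ω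
    simp only [tens, ContinuousLinearMap.smulRight_apply, innerSL_apply_apply, inner_smul_right]
    rw [real_inner_comm (tau 𝓧 l y), mul_comm]
  have hi2 := hi.apply_continuousLinearMap (tau 𝓧 l y)
  constructor
  · simp only [← he]
    exact hi2.const_inner _
  · simp only [← he]
    rw [integral_inner hi2, Vcov, ContinuousLinearMap.integral_apply hi]

theorem aux_Phi (P : Measure Ω) (X : Ω → PiLp 2 𝓧) (y : PiLp 2 𝓧) :
    ⟪y, PhiOp P X y⟫ = ∑ k, ⟪tau 𝓧 k y, Vcov P X k k (tau 𝓧 k y)⟫ := by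
  simp [PhiOp, inner_sum, ContinuousLinearMap.sum_apply, ContinuousLinearMap.adjoint_inner_right]

theorem aux_Psi (P : Measure Ω) (X : Ω → PiLp 2 𝓧) (y : PiLp 2 𝓧) :
    ⟪y, PhiOp P X y⟫ + ⟪y, PsiOp P X y⟫ =
      ∑ k, ∑ l, ⟪tau 𝓧 k y, Vcov P X k l (tau 𝓧 l y)⟫ := by
  rw [aux_Phi, PsiOp]
  simp only [ContinuousLinearMap.sum_apply, inner_sum]
  rw [← Finset.sum_add_distrib]
  refine Finset.sum_congr rfl fun k _ => ?_
  rw [← Finset.add_sum_erase _ _ (Finset.mem_univ k), ← Finset.add_sum_erase _ _ (Finset.mem_univ k)]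
  simp only [if_true, ContinuousLinearMap.zero_apply, inner_zero_right, zero_add]
  congr 1
  refine Finset.sum_congr rfl fun l hl => ?_
  rw [if_neg (Finset.ne_of_mem_erase hl)]
  simp [ContinuousLinearMap.adjoint_inner_right]

/-- Every eigenvalue `ρ` of the self-adjoint operator
`T = Φ^{-1/2} Ψ Φ^{-1/2}` satisfies `-1 ≤ ρ ≤ K(K-1)`. -/
theorem stmt_4 (hK : 2 ≤ K) (P : Measure Ω) [IsProbabilityMeasure P]
    (X : Ω → PiLp 2 𝓧) (hXmeas : AEStronglyMeasurable X P)
    (hX2 : Integrable (fun ω => ‖X ω‖ ^ 2) P)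
    (hX0 : ∫ ω, X ω ∂P = 0)
    (hVunit : ∀ k, IsUnit (Vcov P X k k))
    (Φis : PiLp 2 𝓧 →L[ℝ] PiLp 2 𝓧) (hΦis : IsInvSqrt (PhiOp P X) Φis) :
    ∀ (ρ : ℝ) (x : PiLp 2 𝓧), x ≠ 0 → (Φis ∘L PsiOp P X ∘L Φis) x = ρ • x →
      -1 ≤ ρ ∧ ρ ≤ (K : ℝ) * ((K : ℝ) - 1) := by
  intro ρ x hx hρ
  obtain ⟨hS, h1, h2⟩ := hΦis
  have hc : PhiOp P X ∘L Φis = Φis ∘L PhiOp P X := by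
    calc PhiOp P X ∘L Φis = (PhiOp P X ∘L Φis) ∘L ((Φis ∘L Φis) ∘L PhiOp P X) := by
          rw [h1]; rfl
      _ = (PhiOp P X ∘L (Φis ∘L Φis)) ∘L (Φis ∘L PhiOp P X) := rfl
      _ = Φis ∘L PhiOp P X := by rw [h2]; rfl
  have hy : Φis (PhiOp P X (Φis x)) = x := by
    have e1 : PhiOp P X (Φis x) = Φis (PhiOp P X x) := DFunLike.congr_fun hc x
    rw [e1]
    exact DFunLike.congr_fun h1 x
  have hsym : ∀ a b, ⟪Φis a, b⟫ = ⟪a, Φis b⟫ := fun a b => hS.isSymmetric a b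
  set y := Φis x with hyd
  have q1 : ⟪y, PhiOp P X y⟫ = ‖x‖ ^ 2 := by
    rw [hyd, hsym, ← hyd, hy, real_inner_self_eq_norm_sq]
  have q2 : ⟪y, PsiOp P X y⟫ = ρ * ‖x‖ ^ 2 := by
    have e : Φis (PsiOp P X y) = ρ • x := hρ
    rw [hyd, hsym, ← hyd, e, inner_smul_right, real_inner_self_eq_norm_sq]
  have q3 := aux_Psi P X y
  rw [q1, q2] at q3
  rw [aux_Phi] at q1
  set u : Fin K → Ω → ℝ := fun k ω => ⟪tau 𝓧 k y, tau 𝓧 k (X ω)⟫ with hu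
  have hI : ∀ k l, Integrable (fun ω => u k ω * u l ω) P :=
    fun k l => (aux_intu P X hXmeas hX2 k l y).1
  have hE : ∀ k l, ⟪tau 𝓧 k y, Vcov P X k l (tau 𝓧 l y)⟫ = ∫ ω, u k ω * u l ω ∂P :=
    fun k l => (aux_intu P X hXmeas hX2 k l y).2
  simp only [hE] at q1 q3
  have hIs : Integrable (fun ω => ∑ k, u k ω * u k ω) P := integrable_finsetSum _ fun k _ => hI k k
  have hIss : Integrable (fun ω => ∑ k, ∑ l, u k ω * u l ω) P :=
    integrable_finsetSum _ fun k _ => integrable_finsetSum _ fun l _ => hI k l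
  rw [← integral_finsetSum _ (fun k _ => hI k k)] at q1
  have q4 : ∑ k, ∑ l, ∫ ω, u k ω * u l ω ∂P = ∫ ω, ∑ k, ∑ l, u k ω * u l ω ∂P := by
    rw [integral_finsetSum _ (fun k _ => integrable_finsetSum _ fun l _ => hI k l)]
    exact Finset.sum_congr rfl fun k _ => (integral_finsetSum _ fun l _ => hI k l).symm
  rw [q4] at q3
  have hsq : ∀ ω, ∑ k, ∑ l, u k ω * u l ω = (∑ k, u k ω) ^ 2 := fun ω => by
    rw [sq, Finset.sum_mul_sum]
  have lo : 0 ≤ ∫ ω, ∑ k, ∑ l, u k ω * u l ω ∂P :=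
    integral_nonneg fun ω => by
      simp only [hsq]
      exact sq_nonneg _
  have hi : ∫ ω, ∑ k, ∑ l, u k ω * u l ω ∂P ≤ ∫ ω, (K : ℝ) * ∑ k, u k ω * u k ω ∂P :=
    integral_mono hIss (hIs.const_mul _) fun ω => by
      simp only [hsq]
      have := sq_sum_le_card_mul_sum_sq (s := Finset.univ) (f := fun k => u k ω)
      simpa [sq] using this
  rw [integral_const_mul, q1] at hi
  rw [← q3] at lo hi
  have hxp : 0 < ‖x‖ ^ 2 := by positivity
  have hK' : (2 : ℝ) ≤ K := by exact_mod_cast hK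
  have l1 : -1 ≤ ρ := by
    by_contra hcon
    push Not at hcon
    nlinarith
  have l2 : ρ ≤ (K : ℝ) - 1 := by
    by_contra hcon
    push Not at hcon
    nlinarith
  exact ⟨l1, by nlinarith⟩
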